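/- Let α ∈ {0, 1, 2}, let r > 0, and let f : ℝ → ℝ be three times continuously differentiable on a neighborhood of r. Then there exist constants C > 0 and δ > 0 such that for all h with 0 < h < δ, setting r₊ = r + h/2 and r₋ = r − h/2, one has | (f(r₊)·r₊^α − f(r₋)·r₋^α) / ((r₊^{α+1} − r₋^{α+1})/(α+1)) − ( (f(r₊) − f(r₋))/h + α·f(r)/r ) | ≤ C·h². (That is, the finite-volume divergence approximation of Method Two and the expanded-form approximation of Method One differ by O(h²).) -/

import Mathlib

lemma taylor_aux (r : ℝ) (f : ℝ → ℝ) (hf : ContDiffAt ℝ 3 f r) :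
    ∃ K > (0:ℝ), ∃ δ > (0:ℝ), ∀ t : ℝ, |t| < δ →
      |f (r + t) - f r - deriv f r * t| ≤ K * t ^ 2 := by
  have h1 : ContDiffAt ℝ 1 (deriv f) r := by
    have := (hf.fderiv_right (m := 1) (by norm_num)).clm_apply
      (contDiffAt_const (c := (1:ℝ)))
    exact this
  have h2 : DifferentiableAt ℝ (deriv f) r := h1.differentiableAt (by norm_num)
  have h3 := h2.hasDerivAt.isBigO_sub
  obtain ⟨K, hK, hb⟩ := h3.exists_pos
  have hd : ∀ᶠ y in nhds r, DifferentiableAt ℝ f y := by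
    have := (hf.of_le (m := 1) (by norm_num)).eventually (by norm_num)
    exact this.mono fun y hy => hy.differentiableAt (by norm_num)
  obtain ⟨δ, hδ, hball⟩ := Metric.eventually_nhds_iff.1 (hd.and hb.bound)
  refine ⟨K, hK, δ, hδ, fun t ht => ?_⟩
  have key := Convex.norm_image_sub_le_of_norm_hasDerivWithin_le
    (f := fun y => f y - f r - deriv f r * (y - r)) (f' := fun y => deriv f y - deriv f r)
    (s := Metric.closedBall r |t|) (C := K * |t|) (x := r) (y := r + t) ?_ ?_
    (convex_closedBall _ _) (by simp) (by simp)
  · simp only [Real.norm_eq_abs] at key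
    have e : K * t ^ 2 = K * |t| * |r + t - r| := by
      rw [add_sub_cancel_left, mul_assoc, abs_mul_abs_self]; ring
    rw [e]
    convert key using 2
    ring
  · intro y hy
    have hy' : dist y r < δ := lt_of_le_of_lt hy ht
    have := ((hball hy').1.hasDerivAt.sub_const (f r)).sub
      (((hasDerivAt_id y).sub_const r).const_mul (deriv f r))
    rw [mul_one] at this
    exact this.hasDerivWithinAt
  · intro y hy
    have hy' : dist y r < δ := lt_of_le_of_lt hy ht
    refine (hball hy').2.trans ?_
    have : ‖y - r‖ ≤ |t| := by simpa [dist_eq_norm] using hy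
    gcongr

/-- The finite-volume divergence approximation of Method Two and the expanded-form
approximation of Method One differ by `O(h²)`. -/
theorem stmt_0 (α : ℕ) (hα : α = 0 ∨ α = 1 ∨ α = 2) (r : ℝ) (hr : 0 < r)
    (f : ℝ → ℝ) (hf : ContDiffAt ℝ 3 f r) :
    ∃ C > (0:ℝ), ∃ δ > (0:ℝ), ∀ h : ℝ, 0 < h → h < δ →
      |(f (r + h/2) * (r + h/2) ^ α - f (r - h/2) * (r - h/2) ^ α) /
          (((r + h/2) ^ (α + 1) - (r - h/2) ^ (α + 1)) / ((α : ℝ) + 1))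
        - ((f (r + h/2) - f (r - h/2)) / h + (α : ℝ) * f r / r)| ≤ C * h ^ 2 := by
  obtain ⟨K, hK, δ, hδ, hT⟩ := taylor_aux r f hf
  have main : ∀ h : ℝ, 0 < h → h < min δ 1 →
      |f (r + h/2) + f (r - h/2) - 2 * f r| ≤ K * h ^ 2 ∧
      |(f (r + h/2) - f (r - h/2)) / h| ≤ |deriv f r| + K := by
    intro h h0 h1
    have hhδ := h1.trans_le (min_le_left _ _)
    have hh1 := h1.trans_le (min_le_right _ _)
    have a := hT (h/2) (by rw [abs_of_pos (by positivity)]; linarith)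
    have b := hT (-(h/2)) (by rw [abs_neg, abs_of_pos (by positivity)]; linarith)
    rw [← sub_eq_add_neg] at b
    rw [abs_le] at a b
    have hp : 0 < K * h ^ 2 := by positivity
    constructor
    · rw [abs_le]; constructor <;> nlinarith
    · rw [abs_div, abs_of_pos h0, div_le_iff₀ h0]
      have hp2 : K * h ^ 2 ≤ K * h := by
        have : h ^ 2 ≤ h := by nlinarith
        gcongr
      have c1 := mul_le_mul_of_nonneg_right (le_abs_self (deriv f r)) h0.le
      have c2 := mul_le_mul_of_nonneg_right (neg_abs_le (deriv f r)) h0.le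
      rw [abs_le]; constructor <;> nlinarith
  have hm : 0 < min δ 1 := lt_min hδ one_pos
  rcases hα with rfl | rfl | rfl
  · refine ⟨1, one_pos, 1, one_pos, fun h h0 _ => ?_⟩
    have : (f (r + h/2) * (r + h/2) ^ 0 - f (r - h/2) * (r - h/2) ^ 0) /
          (((r + h/2) ^ (0 + 1) - (r - h/2) ^ (0 + 1)) / (((0:ℕ) : ℝ) + 1))
        - ((f (r + h/2) - f (r - h/2)) / h + ((0:ℕ) : ℝ) * f r / r) = 0 := by
      have e : (r + h/2) ^ (0 + 1) - (r - h/2) ^ (0 + 1) = h := by ring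
      rw [e]; simp
    rw [this, abs_zero]; positivity
  · refine ⟨K / (2 * r), by positivity, min δ 1, hm, fun h h0 h1 => ?_⟩
    have a := (main h h0 h1).1
    have e : (r + h/2) ^ (1 + 1) - (r - h/2) ^ (1 + 1) = 2 * r * h := by ring
    have : (f (r + h/2) * (r + h/2) ^ 1 - f (r - h/2) * (r - h/2) ^ 1) /
          (((r + h/2) ^ (1 + 1) - (r - h/2) ^ (1 + 1)) / (((1:ℕ) : ℝ) + 1))
        - ((f (r + h/2) - f (r - h/2)) / h + ((1:ℕ) : ℝ) * f r / r)
        = (f (r + h/2) + f (r - h/2) - 2 * f r) / (2 * r) := by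
      rw [e]
      generalize f (r + h/2) = u
      generalize f (r - h/2) = v
      push_cast
      field_simp
      ring
    rw [this, abs_div, abs_of_pos (by positivity : 0 < 2 * r), div_mul_eq_mul_div]
    gcongr
  · refine ⟨((|deriv f r| + K) / 6 + K * r + |f r| / (6 * r)) / r ^ 2, by positivity,
      min δ 1, hm, fun h h0 h1 => ?_⟩
    obtain ⟨a, b⟩ := main h h0 h1
    have e : (r + h/2) ^ (2 + 1) - (r - h/2) ^ (2 + 1) = 3 * h * (r ^ 2 + h ^ 2 / 12) := by ring
    have hq : 0 < r ^ 2 + h ^ 2 / 12 := by positivity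
    have : (f (r + h/2) * (r + h/2) ^ 2 - f (r - h/2) * (r - h/2) ^ 2) /
          (((r + h/2) ^ (2 + 1) - (r - h/2) ^ (2 + 1)) / (((2:ℕ) : ℝ) + 1))
        - ((f (r + h/2) - f (r - h/2)) / h + ((2:ℕ) : ℝ) * f r / r)
        = ((f (r + h/2) - f (r - h/2)) / h * (h ^ 2 / 6)
            + (f (r + h/2) + f (r - h/2) - 2 * f r) * r
            - f r * (h ^ 2 / (6 * r))) / (r ^ 2 + h ^ 2 / 12) := by
      rw [e]
      generalize f (r + h/2) = u
      generalize f (r - h/2) = v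
      push_cast
      have h2 : h ≠ 0 := h0.ne'
      have h3 : r ≠ 0 := hr.ne'
      obtain ⟨q, hqe⟩ : ∃ q, q = r ^ 2 + h ^ 2 / 12 := ⟨_, rfl⟩
      rw [← hqe] at hq ⊢
      field_simp
      subst hqe
      ring
    rw [this, abs_div, abs_of_pos hq, div_mul_eq_mul_div (_ + _ + _) (r ^ 2) (h ^ 2)]
    refine div_le_div₀ (by positivity) ?_ (by positivity) (by nlinarith [sq_nonneg h])
    have tri : ∀ x y z : ℝ, |x + y - z| ≤ |x| + |y| + |z| := fun x y z =>
      (norm_sub_le (x + y) z).trans (add_le_add (abs_add_le x y) le_rfl)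
    refine (tri _ _ _).trans ?_
    rw [abs_mul, abs_mul, abs_mul, abs_of_pos hr, abs_of_pos (by positivity : 0 < h ^ 2 / 6),
      abs_of_pos (by positivity : 0 < h ^ 2 / (6 * r))]
    calc _ ≤ (|deriv f r| + K) * (h ^ 2 / 6) + K * h ^ 2 * r + |f r| * (h ^ 2 / (6 * r)) := by
          gcongr
      _ = _ := by field_simp
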